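/- For every integer l ≥ 2, the action of K on the set of maximal isotropic flags in ℂ^{2l+1} has exactly l+2 orbits: the quotient of the set of maximal isotropic flags by the K-action is finite of cardinality l+2. -/

import Mathlib

open Module Submodule

noncomputable section

/-- `stdVec n m` is the `m`-th standard basis vector of `ℂ^n` (1-indexed); `0` out of range. -/
def stdVec (n m : ℕ) : Fin n → ℂ :=
  if h : 1 ≤ m ∧ m ≤ n then Pi.single (⟨m - 1, by omega⟩ : Fin n) 1 else 0

/-- `stdSub n k` is the subspace `U_k = span(e_1, …, e_k)` of `ℂ^n`. -/
def stdSub (n k : ℕ) : Submodule ℂ (Fin n → ℂ) :=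
  span ℂ (stdVec n '' Set.Icc 1 k)

/-- The action of an invertible linear map of `ℂ^n` on a chain of subspaces. -/
def actFlag (n : ℕ) (g : (Fin n → ℂ) ≃ₗ[ℂ] (Fin n → ℂ))
    (V : ℕ → Submodule ℂ (Fin n → ℂ)) (k : ℕ) : Submodule ℂ (Fin n → ℂ) :=
  Submodule.map g.toLinearMap (V k)

/-- The orbit of the chain `V` under a set `B` of invertible linear maps. -/
def orbitOf (n : ℕ) (B : Set ((Fin n → ℂ) ≃ₗ[ℂ] (Fin n → ℂ)))
    (V : ℕ → Submodule ℂ (Fin n → ℂ)) : Set (ℕ → Submodule ℂ (Fin n → ℂ)) :=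
  {V' | ∃ b ∈ B, actFlag n b V = V'}

/-- The symmetric bilinear form `β(x,y) = ∑_{k=1}^n x_k y_{n+1-k}` on `ℂ^n`. -/
def betaF (n : ℕ) (x y : Fin n → ℂ) : ℂ := ∑ k : Fin n, x k * y k.rev

/-- `SO(n,ℂ)` for the form `β`. -/
def SOgrp (n : ℕ) : Set ((Fin n → ℂ) ≃ₗ[ℂ] (Fin n → ℂ)) :=
  {g | LinearMap.det g.toLinearMap = 1 ∧ ∀ x y, betaF n (g x) (g y) = betaF n x y}

/-- A maximal isotropic flag `V 1 ⊂ ⋯ ⊂ V l` in `ℂ^n` (values pinned outside `1..l`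
so that two flags are equal iff they agree in degrees `1, …, l`). -/
def IsIsoFlag (n l : ℕ) (V : ℕ → Submodule ℂ (Fin n → ℂ)) : Prop :=
  (∀ i, i ≤ l → finrank ℂ ↥(V i) = i) ∧ (∀ i, V i ≤ V (i + 1)) ∧ (∀ i, l ≤ i → V i = V l) ∧
    (∀ u ∈ V l, ∀ w ∈ V l, betaF n u w = 0)

/-- The isotropic flag `(v 1 ⊂ ⋯ ⊂ v l)` spanned by `v 1, …, v l`. -/
def isoFlagOf (n l : ℕ) (v : ℕ → Fin n → ℂ) (k : ℕ) : Submodule ℂ (Fin n → ℂ) :=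
  span ℂ (v '' Set.Icc 1 (min k l))

/-- `K = {g ∈ SO(2l+1) : g e_0 = e_0}` (here `e_0 = e_{l+1}`), a copy of `SO(2l)`. -/
def Kodd (l : ℕ) : Set ((Fin (2 * l + 1) → ℂ) ≃ₗ[ℂ] (Fin (2 * l + 1) → ℂ)) :=
  {g | g ∈ SOgrp (2 * l + 1) ∧
       g (stdVec (2 * l + 1) (l + 1)) = stdVec (2 * l + 1) (l + 1)}

/-- `V'` lies in the `K`-orbit of `V`. -/
def InKOddOrbit (l : ℕ) (V V' : ℕ → Submodule ℂ (Fin (2 * l + 1) → ℂ)) : Prop :=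
  ∃ g ∈ Kodd l, actFlag (2 * l + 1) g V = V'

/-- The set of `K`-orbits of maximal isotropic flags in `ℂ^{2l+1}`. -/
def IsoOrbitSpaceOdd (l : ℕ) : Type :=
  Quot fun F F' : {V : ℕ → Submodule ℂ (Fin (2 * l + 1) → ℂ) // IsIsoFlag (2 * l + 1) l V} =>
    InKOddOrbit l F.1 F'.1

/-! ### Witt's extension theorem over `ℂ` -/

section Witt

variable {E : Type*} [AddCommGroup E] [Module ℂ E] [FiniteDimensional ℂ E]

set_option linter.unusedSectionVars false

lemma witt_dual (B : E →ₗ[ℂ] E →ₗ[ℂ] ℂ) (hnd : ∀ x, (∀ y, B x y = 0) → x = 0)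
    {m : ℕ} (a : Fin m → E) (ha : LinearIndependent ℂ a) (φ : Fin m → ℂ) :
    ∃ x, ∀ j, B x (a j) = φ j := by
  have hinj : Function.Injective B := by
    rw [injective_iff_map_eq_zero]
    intro x hx
    exact hnd x fun y => by rw [hx]; rfl
  have hsurj : Function.Surjective B :=
    (LinearMap.injective_iff_surjective_of_finrank_eq_finrank
      (Subspace.dual_finrank_eq (K := ℂ) (V := E)).symm).1 hinj
  obtain ⟨f, hf⟩ := LinearMap.exists_extend ((Basis.span ha).constr ℂ φ)
  obtain ⟨x, hx⟩ := hsurj f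
  refine ⟨x, fun j => ?_⟩
  rw [hx]
  have h1 := congrArg (fun F => F (Basis.span ha j)) hf
  simp only [Basis.constr_basis] at h1
  rw [← h1]
  simp [Basis.span_apply]

lemma witt_perp_span (B : E →ₗ[ℂ] E →ₗ[ℂ] ℂ) {m : ℕ} (a : Fin m → E) (r : E)
    (hr : ∀ j, B r (a j) = 0) (x : E) (hx : x ∈ span ℂ (Set.range a)) : B r x = 0 := by
  have : span ℂ (Set.range a) ≤ LinearMap.ker (B r) := by
    rw [span_le]
    rintro _ ⟨j, rfl⟩
    exact hr j
  exact this hx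

lemma witt_rad (B : E →ₗ[ℂ] E →ₗ[ℂ] ℂ) (hs : ∀ x y, B x y = B y x)
    (hnd : ∀ x, (∀ y, B x y = 0) → x = 0)
    {m : ℕ} (a : Fin m → E) (ha : LinearIndependent ℂ a) (c : Fin m → ℂ) (k : Fin m)
    (hk : c k ≠ 0) (hc : ∀ j, B (∑ i, c i • a i) (a j) = 0) :
    ∃ x, (∀ j, B x (a j) = (Pi.single k 1 : Fin m → ℂ) j) ∧ B x x = 0 ∧
      x ∉ span ℂ (Set.range a) := by
  obtain ⟨x, hx⟩ := witt_dual B hnd a ha (Pi.single k 1)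
  set r := ∑ i, c i • a i with hr
  have hxr : B x r = c k := by
    simp [hr, hx, Pi.single_apply]
  have hrr : B r r = 0 := by
    apply witt_perp_span B a r hc
    exact Submodule.sum_mem _ fun i _ => smul_mem _ _ (subset_span ⟨i, rfl⟩)
  have hrx : B r x = c k := by rw [hs, hxr]
  refine ⟨x + (-(B x x) / (2 * c k)) • r, fun j => ?_, ?_, fun hmem => ?_⟩
  · simp [hx, hc]
  · simp [hxr, hrr, hrx]
    field_simp
    ring
  · have := witt_perp_span B a r hc _ hmem
    simp [hrr, hrx] at this
    exact hk this

lemma witt_nonrad (B : E →ₗ[ℂ] E →ₗ[ℂ] ℂ) (hs : ∀ x y, B x y = B y x)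
    (hnd : ∀ x, (∀ y, B x y = 0) → x = 0)
    {m : ℕ} (hm : m < finrank ℂ E) (a : Fin m → E)
    (hc : ∀ c : Fin m → ℂ, (∀ j, B (∑ i, c i • a i) (a j) = 0) → c = 0) :
    ∃ x, (∀ j, B x (a j) = 0) ∧ B x x = 1 ∧ x ∉ span ℂ (Set.range a) := by
  let T : (Fin m → ℂ) →ₗ[ℂ] (Fin m → ℂ) :=
    { toFun := fun c j => B (∑ i, c i • a i) (a j)
      map_add' := by
        intro c d
        ext j
        simp [add_smul, Finset.sum_add_distrib]
      map_smul' := by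
        intro t c
        ext j
        simp [Finset.mul_sum, mul_assoc] }
  have hT : Function.Injective T := by
    rw [injective_iff_map_eq_zero]
    intro c h
    exact hc c fun j => congrFun h j
  have hTs : Function.Surjective T := LinearMap.injective_iff_surjective.1 hT
  have hdec : ∀ z, ∃ p ∈ span ℂ (Set.range a), ∀ j, B (z - p) (a j) = 0 := by
    intro z
    obtain ⟨c, h⟩ := hTs fun j => B z (a j)
    refine ⟨∑ i, c i • a i,
      Submodule.sum_mem _ fun i _ => smul_mem _ _ (subset_span ⟨i, rfl⟩), fun j => ?_⟩
    have := congrFun h j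
    change B (∑ i, c i • a i) (a j) = B z (a j) at this
    rw [map_sub, LinearMap.sub_apply, this, sub_self]
  have key : ∃ x, (∀ j, B x (a j) = 0) ∧ B x x ≠ 0 := by
    by_contra! hcon
    have hpol : ∀ x y, (∀ j, B x (a j) = 0) → (∀ j, B y (a j) = 0) → B x y = 0 := by
      intro x y hx hy
      have h1 := hcon (x + y) (by intro j; simp [hx, hy])
      have h2 := hcon x hx
      have h3 := hcon y hy
      simp [h2, h3, hs y x] at h1
      exact h1
    have hlt : span ℂ (Set.range a) ≠ ⊤ := by
      intro h
      have h1 := finrank_range_le_card (R := ℂ) a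
      rw [Set.finrank, h, finrank_top] at h1
      simp at h1
      omega
    obtain ⟨z, hz⟩ : ∃ z, z ∉ span ℂ (Set.range a) := by
      by_contra! h
      exact hlt (eq_top_iff.2 fun x _ => h x)
    obtain ⟨p, hp, hpz⟩ := hdec z
    have h0 : z - p = 0 := by
      apply hnd
      intro y
      obtain ⟨q, hq, hqy⟩ := hdec y
      have h1 := hpol _ _ hpz hqy
      have h2 := witt_perp_span B a _ hpz q hq
      rw [map_sub (B (z - p)), h2, sub_zero] at h1
      exact h1
    rw [sub_eq_zero] at h0
    exact hz (h0 ▸ hp)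
  obtain ⟨x, hx, hxx⟩ := key
  obtain ⟨s, hs2⟩ := IsAlgClosed.exists_pow_nat_eq (B x x)⁻¹ (n := 2) (by norm_num)
  have hsx : B (s • x) (s • x) = 1 := by
    simp only [map_smul, LinearMap.smul_apply, smul_eq_mul]
    rw [← mul_assoc, ← sq, hs2, inv_mul_cancel₀ hxx]
  have hsa : ∀ j, B (s • x) (a j) = 0 := by intro j; simp [hx]
  refine ⟨s • x, hsa, hsx, fun hmem => ?_⟩
  have := witt_perp_span B a _ hsa _ hmem
  rw [hsx] at this
  exact one_ne_zero this

lemma witt_step (B : E →ₗ[ℂ] E →ₗ[ℂ] ℂ) (hs : ∀ x y, B x y = B y x)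
    (hnd : ∀ x, (∀ y, B x y = 0) → x = 0)
    {m : ℕ} (hm : m < finrank ℂ E) (a b : Fin m → E) (ha : LinearIndependent ℂ a)
    (hb : LinearIndependent ℂ b) (hab : ∀ i j, B (a i) (a j) = B (b i) (b j)) :
    ∃ x y, x ∉ span ℂ (Set.range a) ∧ y ∉ span ℂ (Set.range b) ∧
      (∀ j, B x (a j) = B y (b j)) ∧ B x x = B y y := by
  have hG : ∀ (c : Fin m → ℂ) j, B (∑ i, c i • a i) (a j) = B (∑ i, c i • b i) (b j) := by
    intro c j
    simp [hab]
  by_cases h : ∀ c : Fin m → ℂ, (∀ j, B (∑ i, c i • a i) (a j) = 0) → c = 0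
  · obtain ⟨x, h1, h2, h3⟩ := witt_nonrad B hs hnd hm a h
    obtain ⟨y, k1, k2, k3⟩ := witt_nonrad B hs hnd hm b (by simpa only [hG] using h)
    exact ⟨x, y, h3, k3, fun j => by rw [h1, k1], by rw [h2, k2]⟩
  · push Not at h
    obtain ⟨c, hc, hc0⟩ := h
    obtain ⟨k, hk⟩ := Function.ne_iff.1 hc0
    obtain ⟨x, h1, h2, h3⟩ := witt_rad B hs hnd a ha c k hk hc
    obtain ⟨y, k1, k2, k3⟩ := witt_rad B hs hnd b hb c k hk (by simpa only [hG] using hc)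
    exact ⟨x, y, h3, k3, fun j => by rw [h1, k1], by rw [h2, k2]⟩

lemma witt_ext (B : E →ₗ[ℂ] E →ₗ[ℂ] ℂ) (hs : ∀ x y, B x y = B y x)
    (hnd : ∀ x, (∀ y, B x y = 0) → x = 0) (d : ℕ) :
    ∀ (m : ℕ) (_ : m + d = finrank ℂ E) (a b : Fin m → E) (_ : LinearIndependent ℂ a)
    (_ : LinearIndependent ℂ b) (_ : ∀ i j, B (a i) (a j) = B (b i) (b j)),
    ∃ g : E ≃ₗ[ℂ] E, (∀ x y, B (g x) (g y) = B x y) ∧ ∀ j, g (a j) = b j := by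
  induction d with
  | zero =>
    intro m hm a b ha hb hab
    let A := basisOfLinearIndependentOfCardEqFinrank' a ha (by simpa using hm)
    let C := basisOfLinearIndependentOfCardEqFinrank' b hb (by simpa using hm)
    have hA : ∀ j, A j = a j := fun j => by simp [A]
    have hC : ∀ j, C j = b j := fun j => by simp [C]
    let g := A.equiv C (Equiv.refl _)
    have hg : ∀ j, g (A j) = C j := fun j => by simp [g]
    refine ⟨g, ?_, fun j => by rw [← hA, hg, hC]⟩
    have : B.compl₁₂ g.toLinearMap g.toLinearMap = B := by
      refine LinearMap.ext_basis A A fun i j => ?_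
      change B (g (A i)) (g (A j)) = B (A i) (A j)
      rw [hg, hg, hC, hC, hA, hA, hab]
    intro x y
    exact congrArg (fun F => F x y) this
  | succ d ih =>
    intro m hm a b ha hb hab
    obtain ⟨x, y, hx, hy, hxy, hxx⟩ := witt_step B hs hnd (by omega) a b ha hb hab
    obtain ⟨g, hg, hgj⟩ := ih (m + 1) (by omega) (Fin.snoc a x) (Fin.snoc b y)
      (linearIndependent_finSnoc.2 ⟨ha, hx⟩) (linearIndependent_finSnoc.2 ⟨hb, hy⟩) (by
        intro i j
        induction i using Fin.lastCases with
        | last =>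
          induction j using Fin.lastCases with
          | last => simpa using hxx
          | cast j => simpa using hxy j
        | cast i =>
          induction j using Fin.lastCases with
          | last => simpa [hs (a i) x, hs (b i) y] using hxy i
          | cast j => simpa using hab i j)
    refine ⟨g, hg, fun j => ?_⟩
    simpa using hgj j.castSucc

lemma isom_det (B : E →ₗ[ℂ] E →ₗ[ℂ] ℂ) (hnd : ∀ x, (∀ y, B x y = 0) → x = 0)
    (g : E ≃ₗ[ℂ] E) (hg : ∀ x y, B (g x) (g y) = B x y) :
    LinearMap.det g.toLinearMap = 1 ∨ LinearMap.det g.toLinearMap = -1 := by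
  let b := finBasis ℂ E
  have hB : B.compl₁₂ g.toLinearMap g.toLinearMap = B := by
    ext x y
    exact hg x y
  have h1 := LinearMap.toMatrix₂_compl₁₂ b b b b B g.toLinearMap g.toLinearMap
  rw [hB] at h1
  have h2 := congrArg Matrix.det h1
  rw [Matrix.det_mul, Matrix.det_mul, Matrix.det_transpose, LinearMap.det_toMatrix] at h2
  have h3 : (LinearMap.toMatrix₂ b b B).det ≠ 0 := by
    rw [← LinearMap.separatingLeft_iff_det_ne_zero]
    exact hnd
  rw [← sq_eq_one_iff]
  have : (LinearMap.det g.toLinearMap ^ 2 - 1) * (LinearMap.toMatrix₂ b b B).det = 0 := by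
    linear_combination -h2
  rcases mul_eq_zero.1 this with h | h
  · exact sub_eq_zero.1 h
  · exact absurd h h3

lemma exists_refl (B : E →ₗ[ℂ] E →ₗ[ℂ] ℂ) (hs : ∀ x y, B x y = B y x) (x : E)
    (hx : B x x ≠ 0) : ∃ g : E ≃ₗ[ℂ] E, (∀ x y, B (g x) (g y) = B x y) ∧
      LinearMap.det g.toLinearMap = -1 ∧ ∀ y, B x y = 0 → g y = y := by
  let f : Dual ℂ E := (-2 / B x x) • B x
  let T := LinearMap.transvection f x
  have hT : ∀ y, T y = y + (-2 / B x x * B x y) • x := fun y => by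
    simp [T, f, LinearMap.transvection.apply]
  have hdet : LinearMap.det T = -1 := by
    rw [LinearMap.transvection.det]
    simp [f]
    field_simp
    norm_num
  let g := LinearEquiv.ofIsUnitDet (f := T) (v := finBasis ℂ E) (v' := finBasis ℂ E)
    (by rw [LinearMap.det_toMatrix, hdet]; exact isUnit_one.neg)
  have hgT : g.toLinearMap = T := by ext y; rfl
  have hgy : ∀ y, g y = T y := fun y => rfl
  refine ⟨g, fun y z => ?_, by rw [hgT, hdet], fun y hy => by rw [hgy, hT, hy]; simp⟩
  rw [hgy, hgy, hT, hT]
  simp [hs y x]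
  field_simp
  ring

end Witt

/-! ### The form, the standard flag and normal forms -/

/-- The bilinear form as a bundled map. -/
def Bf (n : ℕ) : (Fin n → ℂ) →ₗ[ℂ] (Fin n → ℂ) →ₗ[ℂ] ℂ :=
  LinearMap.mk₂ ℂ (betaF n)
    (fun x y z => by simp [betaF, add_mul, Finset.sum_add_distrib])
    (fun c x y => by simp [betaF, Finset.mul_sum, mul_assoc])
    (fun x y z => by simp [betaF, mul_add, Finset.sum_add_distrib])
    (fun c x y => by simp [betaF, Finset.mul_sum, mul_left_comm])

lemma Bf_apply (n : ℕ) (x y : Fin n → ℂ) : Bf n x y = betaF n x y := rfl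

lemma Bf_symm (n : ℕ) (x y : Fin n → ℂ) : Bf n x y = Bf n y x := by
  rw [Bf_apply, Bf_apply, betaF, betaF, ← Equiv.sum_comp Fin.revPerm]
  simp [mul_comm]

/-- Standard basis vectors, indexed from zero. -/
def ev (l j : ℕ) : Fin (2 * l + 1) → ℂ := fun i => if i.val = j then 1 else 0

lemma ev_stdVec (l : ℕ) : stdVec (2 * l + 1) (l + 1) = ev l l := by
  rw [stdVec, dif_pos ⟨by omega, by omega⟩]
  ext i
  simp [ev, Pi.single_apply, Fin.ext_iff]

lemma Bf_ev (l j : ℕ) (hj : j ≤ 2 * l) (x : Fin (2 * l + 1) → ℂ) :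
    Bf (2 * l + 1) x (ev l j) = x ⟨2 * l - j, by omega⟩ := by
  rw [Bf_apply, betaF, Finset.sum_eq_single ⟨2 * l - j, by omega⟩]
  · simp only [ev, Fin.val_rev]
    rw [if_pos (by omega), mul_one]
  · intro b _ hb
    simp only [ev, Fin.val_rev]
    rw [if_neg, mul_zero]
    intro h
    apply hb
    ext
    simp
    omega
  · simp

lemma Bf_ev_ev (l i j : ℕ) (hj : j ≤ 2 * l) :
    Bf (2 * l + 1) (ev l i) (ev l j) = if i + j = 2 * l then 1 else 0 := by
  rw [Bf_ev l j hj]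
  simp only [ev]
  congr 1
  simp
  omega

lemma Bf_nd (l : ℕ) (x : Fin (2 * l + 1) → ℂ) (h : ∀ y, Bf (2 * l + 1) x y = 0) : x = 0 := by
  ext i
  have := h (ev l (2 * l - i.val))
  rw [Bf_ev _ _ (by omega)] at this
  rw [Pi.zero_apply, ← this]
  congr 1
  ext
  simp
  omega

/-- isometries -/
def IsIsom (l : ℕ) (g : (Fin (2 * l + 1) → ℂ) ≃ₗ[ℂ] (Fin (2 * l + 1) → ℂ)) : Prop :=
  ∀ x y, Bf (2 * l + 1) (g x) (g y) = Bf (2 * l + 1) x y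

/-- standard flag -/
def V0 (l k : ℕ) : Submodule ℂ (Fin (2 * l + 1) → ℂ) := span ℂ (ev l '' Set.Iio (min k l))

lemma ev_li (l : ℕ) (s : Set ℕ) (hs : ∀ j ∈ s, j ≤ 2 * l) :
    LinearIndependent ℂ (fun j : s => ev l j.1) := by
  have h := (Pi.basisFun ℂ (Fin (2 * l + 1))).linearIndependent.comp
    (fun j : s => (⟨j.1, by have := hs j.1 j.2; omega⟩ : Fin (2 * l + 1))) (by
      intro i j hij
      simpa [Fin.ext_iff, Subtype.ext_iff] using hij)
  convert h using 1
  ext j i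
  simp [ev, Pi.single_apply, Fin.ext_iff]

lemma V0_flag (l : ℕ) : IsIsoFlag (2 * l + 1) l (V0 l) := by
  refine ⟨fun i hi => ?_, fun i => ?_, fun i hi => ?_, ?_⟩
  · have h := finrank_span_eq_card (ev_li l (Set.Iio i)
      (by intro j hj; have : j < i := hj; omega))
    rw [V0, min_eq_left hi, Set.image_eq_range, h]
    simp
  · apply span_mono
    apply Set.image_mono
    intro j hj
    simp only [Set.mem_Iio] at *
    omega
  · rw [V0, V0, min_eq_right hi, min_self]
  · have h2 : ∀ i < l, ∀ w ∈ V0 l l, Bf (2 * l + 1) (ev l i) w = 0 := by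
      intro i hi
      have : V0 l l ≤ LinearMap.ker (Bf (2 * l + 1) (ev l i)) := by
        rw [V0, span_le]
        rintro _ ⟨j, hj, rfl⟩
        simp at hj
        change Bf (2 * l + 1) (ev l i) (ev l j) = 0
        rw [Bf_ev_ev _ _ _ (by omega), if_neg (by omega)]
      exact fun w hw => this hw
    intro u hu w hw
    have : V0 l l ≤ LinearMap.ker (Bf (2 * l + 1) w) := by
      rw [V0, span_le]
      rintro _ ⟨j, hj, rfl⟩
      simp at hj
      change Bf (2 * l + 1) w (ev l j) = 0
      rw [Bf_symm, h2 j hj w hw]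
    rw [← Bf_apply, Bf_symm]
    exact this hu

lemma flag_mono {l : ℕ} {V : ℕ → Submodule ℂ (Fin (2 * l + 1) → ℂ)}
    (hV : IsIsoFlag (2 * l + 1) l V) : Monotone V := monotone_nat_of_le_succ hV.2.1

lemma flag_span {l : ℕ} {V : ℕ → Submodule ℂ (Fin (2 * l + 1) → ℂ)}
    (hV : IsIsoFlag (2 * l + 1) l V) (v : ℕ → Fin (2 * l + 1) → ℂ)
    (hv : ∀ j < l, v j ∈ V (j + 1) ∧ v j ∉ V j) :
    ∀ k ≤ l, V k = span ℂ (v '' Set.Iio k) := by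
  intro k
  induction k with
  | zero =>
    intro hk
    have h := hV.1 0 hk
    rw [Submodule.finrank_eq_zero] at h
    rw [h]
    simp
  | succ k ih =>
    intro hk
    have ih := ih (by omega)
    have hI : Set.Iio (k + 1) = insert k (Set.Iio k) := by
      ext x
      simp only [Set.mem_Iio, Set.mem_insert_iff]
      omega
    rw [hI, Set.image_insert_eq, span_insert, ← ih]
    symm
    apply Submodule.eq_of_le_of_finrank_le
    · exact sup_le ((span_singleton_le_iff_mem _ _).2 (hv k hk).1) (hV.2.1 k)
    · rw [hV.1 _ hk]
      have hlt : V k < span ℂ {v k} ⊔ V k := by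
        refine lt_of_le_of_ne le_sup_right fun h => (hv k hk).2 ?_
        rw [h]
        exact mem_sup_left (mem_span_singleton_self _)
      have := Submodule.finrank_lt_finrank_of_lt hlt
      rw [hV.1 k (by omega)] at this
      exact this

open Classical in
/-- type of a flag -/
def ty (l : ℕ) (V : ℕ → Submodule ℂ (Fin (2 * l + 1) → ℂ)) : ℕ :=
  Nat.findGreatest (fun j => ∀ x ∈ V j, Bf (2 * l + 1) (ev l l) x = 0) l

lemma ty_le (l : ℕ) (V : ℕ → Submodule ℂ (Fin (2 * l + 1) → ℂ)) : ty l V ≤ l := by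
  classical
  exact Nat.findGreatest_le l

lemma ty_iff {l : ℕ} {V : ℕ → Submodule ℂ (Fin (2 * l + 1) → ℂ)}
    (hV : IsIsoFlag (2 * l + 1) l V) (j : ℕ) (hj : j ≤ l) :
    (∀ x ∈ V j, Bf (2 * l + 1) (ev l l) x = 0) ↔ j ≤ ty l V := by
  classical
  constructor
  · intro h
    exact Nat.le_findGreatest hj h
  · intro h x hx
    have h0 : ∀ x ∈ V 0, Bf (2 * l + 1) (ev l l) x = 0 := by
      have h := hV.1 0 (Nat.zero_le _)
      rw [Submodule.finrank_eq_zero] at h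
      rw [h]
      intro x hx
      rw [(mem_bot ℂ).1 hx, map_zero]
    have := Nat.findGreatest_spec (P := fun j => ∀ x ∈ V j, Bf (2 * l + 1) (ev l l) x = 0)
      (Nat.zero_le l) h0
    exact this x (flag_mono hV h hx)

/-- the vector representing type `t` -/
def ep (l t : ℕ) : Fin (2 * l + 1) → ℂ := if t < l then ev l l + ev l (2 * l - t) else ev l l

lemma ep_ev (l t j : ℕ) (hj : j < l) :
    Bf (2 * l + 1) (ep l t) (ev l j) = if j = t then 1 else 0 := by
  rw [ep]
  split_ifs with h1 h2 h2
  · rw [map_add, LinearMap.add_apply, Bf_ev_ev _ _ _ (by omega), Bf_ev_ev _ _ _ (by omega),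
      if_neg (by omega), if_pos (by omega), zero_add]
  · rw [map_add, LinearMap.add_apply, Bf_ev_ev _ _ _ (by omega), Bf_ev_ev _ _ _ (by omega),
      if_neg (by omega), if_neg (by omega), zero_add]
  · omega
  · rw [Bf_ev_ev _ _ _ (by omega), if_neg (by omega)]

lemma ep_ep (l t : ℕ) : Bf (2 * l + 1) (ep l t) (ep l t) = 1 := by
  rw [ep]
  split_ifs with h1
  · simp only [map_add, LinearMap.add_apply]
    rw [Bf_ev_ev _ _ _ (by omega), Bf_ev_ev _ _ _ (by omega), Bf_ev_ev _ _ _ (by omega),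
      Bf_ev_ev _ _ _ (by omega), if_pos (by omega), if_neg (by omega), if_neg (by omega),
      if_neg (by omega)]
    simp
  · rw [Bf_ev_ev _ _ _ (by omega), if_pos (by omega)]

lemma flag_vectors {l : ℕ} {V : ℕ → Submodule ℂ (Fin (2 * l + 1) → ℂ)}
    (hV : IsIsoFlag (2 * l + 1) l V) : ∃ v : ℕ → Fin (2 * l + 1) → ℂ,
    ∀ j < l, v j ∈ V (j + 1) ∧ v j ∉ V j ∧
      Bf (2 * l + 1) (ev l l) (v j) = if j = ty l V then 1 else 0 := by
  have hex : ∀ j < l, ∃ x ∈ V (j + 1), x ∉ V j := by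
    intro j hj
    by_contra! h
    have := Submodule.finrank_mono (show V (j + 1) ≤ V j from h)
    rw [hV.1 _ hj, hV.1 _ hj.le] at this
    omega
  have ht : ty l V < l → ∃ x ∈ V (ty l V + 1), Bf (2 * l + 1) (ev l l) x = 1 := by
    intro h
    have := mt (ty_iff hV (ty l V + 1) h).1 (by omega)
    push Not at this
    obtain ⟨x, hx, hx0⟩ := this
    exact ⟨(Bf (2 * l + 1) (ev l l) x)⁻¹ • x, smul_mem _ _ hx, by simp [hx0]⟩
  have : ∀ j, ∃ x, j < l → (x ∈ V (j + 1) ∧ x ∉ V j ∧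
      Bf (2 * l + 1) (ev l l) x = if j = ty l V then 1 else 0) := by
    intro j
    by_cases hj : j < l
    swap
    · exact ⟨0, fun h => absurd h hj⟩
    obtain ⟨x, hx, hxj⟩ := hex j hj
    rcases lt_trichotomy j (ty l V) with h | h | h
    · refine ⟨x, fun _ => ⟨hx, hxj, ?_⟩⟩
      rw [if_neg h.ne]
      exact (ty_iff hV (j + 1) hj).2 h x hx
    · obtain ⟨y, hy, hy1⟩ := ht (h ▸ hj)
      refine ⟨y, fun _ => ⟨h ▸ hy, fun hyj => ?_, by rw [if_pos h, hy1]⟩⟩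
      have := (ty_iff hV j hj.le).2 h.le y hyj
      rw [hy1] at this
      exact one_ne_zero this
    · obtain ⟨y, hy, hy1⟩ := ht (by omega)
      have hyj : Bf (2 * l + 1) (ev l l) x • y ∈ V j :=
        smul_mem _ _ (flag_mono hV (show ty l V + 1 ≤ j by omega) hy)
      refine ⟨x - Bf (2 * l + 1) (ev l l) x • y, fun _ => ⟨?_, ?_, ?_⟩⟩
      · exact sub_mem hx (hV.2.1 j hyj)
      · intro hmem
        apply hxj
        have := add_mem hmem hyj
        simpa using this
      · rw [if_neg h.ne']
        simp [hy1]
  choose v hv using this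
  exact ⟨v, hv⟩

lemma li_cons (l : ℕ) (v : ℕ → Fin (2 * l + 1) → ℂ) (e : Fin (2 * l + 1) → ℂ)
    (hr : finrank ℂ (span ℂ (v '' Set.Iio l)) = l)
    (hiso : ∀ i < l, ∀ j < l, Bf (2 * l + 1) (v i) (v j) = 0)
    (hee : Bf (2 * l + 1) e e = 1) :
    LinearIndependent ℂ (Fin.cons e (fun j : Fin l => v j) : Fin (l + 1) → _) := by
  have hrange : Set.range (fun j : Fin l => v j) = v '' Set.Iio l := by
    ext x
    constructor
    · rintro ⟨j, rfl⟩
      exact ⟨j, j.2, rfl⟩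
    · rintro ⟨j, hj, rfl⟩
      exact ⟨⟨j, hj⟩, rfl⟩
  rw [linearIndependent_finCons]
  constructor
  · rw [linearIndependent_iff_card_eq_finrank_span, Set.finrank, hrange, hr]
    simp
  · intro hmem
    have hpe : ∀ j : Fin l, Bf (2 * l + 1) (v j) e = 0 := fun j =>
      witt_perp_span (Bf (2 * l + 1)) (fun j : Fin l => v j) (v j)
        (fun i => hiso j j.2 i i.2) e hmem
    have := witt_perp_span (Bf (2 * l + 1)) (fun j : Fin l => v j) e
      (fun j => by rw [Bf_symm]; exact hpe j) e hmem
    rw [hee] at this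
    exact one_ne_zero this

lemma normal {l : ℕ} {V : ℕ → Submodule ℂ (Fin (2 * l + 1) → ℂ)}
    (hV : IsIsoFlag (2 * l + 1) l V) : ∃ g, IsIsom l g ∧ g (ep l (ty l V)) = ev l l ∧
      actFlag (2 * l + 1) g (V0 l) = V := by
  obtain ⟨v, hv⟩ := flag_vectors hV
  have hsp := flag_span hV v fun j hj => ⟨(hv j hj).1, (hv j hj).2.1⟩
  have hvl : ∀ j < l, v j ∈ V l := fun j hj => flag_mono hV hj (hv j hj).1
  have hviso : ∀ i < l, ∀ j < l, Bf (2 * l + 1) (v i) (v j) = 0 := fun i hi j hj =>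
    hV.2.2.2 _ (hvl i hi) _ (hvl j hj)
  have heiso : ∀ i < l, ∀ j < l, Bf (2 * l + 1) (ev l i) (ev l j) = 0 := fun i hi j hj => by
    rw [Bf_ev_ev _ _ _ (by omega), if_neg (by omega)]
  have h00 : Bf (2 * l + 1) (ev l l) (ev l l) = 1 := by
    rw [Bf_ev_ev _ _ _ (by omega), if_pos (by omega)]
  have hli1 := li_cons l v (ev l l) (by rw [← hsp l le_rfl, hV.1 l le_rfl]) hviso h00
  have hli0 := li_cons l (ev l) (ep l (ty l V))
    (by have := (V0_flag l).1 l le_rfl; rwa [V0, min_self] at this) heiso (ep_ep l _)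
  obtain ⟨g, hg, hgj⟩ := witt_ext (Bf (2 * l + 1)) (Bf_symm _) (Bf_nd l) l (l + 1)
    (by simp; omega) _ _ hli0 hli1 (by
      intro i j
      induction i using Fin.cases with
      | zero =>
        induction j using Fin.cases with
        | zero => simp [ep_ep, h00]
        | succ j => simp [ep_ev, (hv j j.2).2.2]
      | succ i =>
        induction j using Fin.cases with
        | zero =>
          simp only [Fin.cons_succ, Fin.cons_zero]
          rw [Bf_symm, ep_ev _ _ _ i.2, Bf_symm, (hv i i.2).2.2]
        | succ j => simp [heiso, hviso])
  refine ⟨g, hg, by simpa using hgj 0, ?_⟩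
  have hgv : ∀ j < l, g (ev l j) = v j := fun j hj => hgj (Fin.succ ⟨j, hj⟩)
  have hk : ∀ k ≤ l, actFlag (2 * l + 1) g (V0 l) k = V k := by
    intro k hk
    rw [actFlag, V0, map_span, hsp k hk, min_eq_left hk, ← Set.image_comp]
    congr 1
    apply Set.image_congr
    intro j hj
    exact hgv j (lt_of_lt_of_le hj hk)
  funext k
  rcases le_total k l with h | h
  · exact hk k h
  · rw [hV.2.2.1 k h, ← hk l le_rfl, actFlag, actFlag, (V0_flag l).2.2.1 k h]

/-! ### Stabilizer of the standard flag and the orbit count -/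

/-- block index of the coordinates -/
def blk (l : ℕ) : Fin l ⊕ (Unit ⊕ Fin l) → Fin (2 * l + 1)
  | .inl j => ⟨j, by omega⟩
  | .inr (.inl _) => ⟨l, by omega⟩
  | .inr (.inr j) => ⟨2 * l - j, by omega⟩

lemma blk_bij (l : ℕ) : Function.Bijective (blk l) := by
  rw [Fintype.bijective_iff_injective_and_card]
  constructor
  · rintro (i | i | i) (j | j | j) h <;> simp [blk, Fin.ext_iff] at h ⊢ <;> omega
  · simp
    omega

lemma V0_coord (l : ℕ) (x : Fin (2 * l + 1) → ℂ) (hx : x ∈ V0 l l) (i : Fin (2 * l + 1))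
    (hi : l ≤ i.val) : x i = 0 := by
  have : V0 l l ≤ LinearMap.ker (LinearMap.proj (R := ℂ) (φ := fun _ => ℂ) i) := by
    rw [V0, span_le]
    rintro _ ⟨j, hj, rfl⟩
    simp at hj
    simp [ev]
    omega
  exact this hx

lemma stab_det (l : ℕ) (g : (Fin (2 * l + 1) → ℂ) ≃ₗ[ℂ] (Fin (2 * l + 1) → ℂ))
    (hg : IsIsom l g) (h0 : g (ev l l) = ev l l)
    (hV : actFlag (2 * l + 1) g (V0 l) = V0 l) : LinearMap.det g.toLinearMap = 1 := by
  let e := Equiv.ofBijective _ (blk_bij l)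
  let M := LinearMap.toMatrix' g.toLinearMap
  have hM : ∀ i j, M i j = g (ev l j.val) i := by
    intro i j
    simp only [M, LinearMap.toMatrix'_apply]
    have : (Pi.single j 1 : Fin (2 * l + 1) → ℂ) = ev l j.val := by
      ext k
      simp [ev, Pi.single_apply, Fin.ext_iff]
    rw [← this]
    rfl
  have hcol : ∀ j < l, g (ev l j) ∈ V0 l l := by
    intro j hj
    rw [← congrFun hV l]
    refine mem_map_of_mem (subset_span ⟨j, ?_, rfl⟩)
    simpa using hj
  let A : Matrix (Fin l) (Fin l) ℂ := fun i j => M (blk l (.inl i)) (blk l (.inl j))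
  let D : Matrix (Fin l) (Fin l) ℂ :=
    fun i j => M (blk l (.inr (.inr i))) (blk l (.inr (.inr j)))
  let X : Matrix (Fin l) (Unit ⊕ Fin l) ℂ := fun i j => M (blk l (.inl i)) (blk l (.inr j))
  let Y : Matrix Unit (Fin l) ℂ :=
    fun i j => M (blk l (.inr (.inl i))) (blk l (.inr (.inr j)))
  have hN : M.submatrix e e =
      Matrix.fromBlocks A X 0 (Matrix.fromBlocks (1 : Matrix Unit Unit ℂ) Y 0 D) := by
    ext i j
    change M (blk l i) (blk l j) = _
    rcases i with i | i | i <;> rcases j with j | j | j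
    · rfl
    · rfl
    · rfl
    · simp only [Matrix.fromBlocks_apply₂₁, Matrix.zero_apply, hM]
      exact V0_coord l _ (hcol _ j.2) _ (by simp [blk])
    · simp only [Matrix.fromBlocks_apply₂₂, Matrix.fromBlocks_apply₁₁, hM]
      simp [blk, h0, ev]
    · rfl
    · simp only [Matrix.fromBlocks_apply₂₁, Matrix.zero_apply, hM]
      exact V0_coord l _ (hcol _ j.2) _ (by simp [blk]; omega)
    · simp only [Matrix.fromBlocks_apply₂₂, Matrix.fromBlocks_apply₂₁, hM, Matrix.zero_apply]
      simp [blk, h0, ev]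
      omega
    · rfl
  have hAD : A.transpose * D = 1 := by
    ext i j
    have h1 := hg (ev l i) (ev l (2 * l - j))
    rw [Bf_ev_ev _ _ _ (by omega), Bf_apply, betaF, ← Equiv.sum_comp e] at h1
    rw [Fintype.sum_sum_type, Fintype.sum_sum_type] at h1
    have hz : ∀ k, g (ev l i) (e (.inr k)) = 0 := by
      intro k
      refine V0_coord l _ (hcol _ i.2) _ ?_
      change l ≤ (blk l (.inr k)).val
      rcases k with k | k <;> simp [blk]
      omega
    simp only [hz, zero_mul, Finset.sum_const_zero, add_zero] at h1
    rw [Matrix.mul_apply, Matrix.one_apply]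
    have h2 : (if (i : ℕ) + (2 * l - j) = 2 * l then (1 : ℂ) else 0) = if i = j then 1 else 0 := by
      congr 1
      simp only [Fin.ext_iff, eq_iff_iff]
      omega
    rw [← h2, ← h1]
    refine Finset.sum_congr rfl fun k _ => ?_
    rw [Matrix.transpose_apply]
    change M _ _ * M _ _ = _
    rw [hM, hM]
    have h3 : (e (.inl k)).rev = blk l (.inr (.inr k)) := by
      change (blk l (.inl k)).rev = _
      ext
      simp [blk]
    rw [h3]
    rfl
  have hdet : A.det * D.det = 1 := by
    have := congrArg Matrix.det hAD
    rwa [Matrix.det_mul, Matrix.det_transpose, Matrix.det_one] at this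
  rw [← LinearMap.det_toMatrix']
  change M.det = 1
  rw [← Matrix.det_submatrix_equiv_self e, hN, Matrix.det_fromBlocks_zero₂₁,
    Matrix.det_fromBlocks_zero₂₁, Matrix.det_one, one_mul, hdet]

lemma mem_Kodd (l : ℕ) (g : (Fin (2 * l + 1) → ℂ) ≃ₗ[ℂ] (Fin (2 * l + 1) → ℂ)) :
    g ∈ Kodd l ↔ IsIsom l g ∧ g (ev l l) = ev l l ∧ LinearMap.det g.toLinearMap = 1 := by
  rw [Kodd, Set.mem_ofPred_eq, ev_stdVec, SOgrp, Set.mem_ofPred_eq]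
  constructor
  · rintro ⟨⟨h1, h2⟩, h3⟩
    exact ⟨h2, h3, h1⟩
  · rintro ⟨h2, h3, h1⟩
    exact ⟨⟨h1, h2⟩, h3⟩

lemma act_trans (n : ℕ) (g h : (Fin n → ℂ) ≃ₗ[ℂ] (Fin n → ℂ))
    (V : ℕ → Submodule ℂ (Fin n → ℂ)) :
    actFlag n (g.trans h) V = actFlag n h (actFlag n g V) := by
  funext k
  simp only [actFlag]
  rw [← Submodule.map_comp]
  rfl

lemma act_symm (n : ℕ) (g : (Fin n → ℂ) ≃ₗ[ℂ] (Fin n → ℂ))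
    (V V' : ℕ → Submodule ℂ (Fin n → ℂ)) (h : actFlag n g V = V') : actFlag n g.symm V' = V := by
  rw [← h, ← act_trans]
  funext k
  simp [actFlag]

lemma isom_trans {l : ℕ} {g h : (Fin (2 * l + 1) → ℂ) ≃ₗ[ℂ] (Fin (2 * l + 1) → ℂ)}
    (hg : IsIsom l g) (hh : IsIsom l h) : IsIsom l (g.trans h) := fun x y => by
  rw [LinearEquiv.trans_apply, LinearEquiv.trans_apply, hh, hg]

lemma isom_symm {l : ℕ} {g : (Fin (2 * l + 1) → ℂ) ≃ₗ[ℂ] (Fin (2 * l + 1) → ℂ)}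
    (hg : IsIsom l g) : IsIsom l g.symm := fun x y => by
  rw [← hg, LinearEquiv.apply_symm_apply, LinearEquiv.apply_symm_apply]

lemma det_trans' {n : ℕ} (g h : (Fin n → ℂ) ≃ₗ[ℂ] (Fin n → ℂ)) :
    LinearMap.det (g.trans h).toLinearMap =
      LinearMap.det h.toLinearMap * LinearMap.det g.toLinearMap := by
  rw [← LinearMap.det_comp]
  rfl

lemma det_symm' {n : ℕ} (g : (Fin n → ℂ) ≃ₗ[ℂ] (Fin n → ℂ)) :
    LinearMap.det g.symm.toLinearMap * LinearMap.det g.toLinearMap = 1 := by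
  rw [← det_trans']
  simp

lemma orbit_trans {l : ℕ} {V V' V'' : ℕ → Submodule ℂ (Fin (2 * l + 1) → ℂ)}
    (h : InKOddOrbit l V V') (h' : InKOddOrbit l V' V'') : InKOddOrbit l V V'' := by
  obtain ⟨g, hg, rfl⟩ := h
  obtain ⟨k, hk, rfl⟩ := h'
  rw [mem_Kodd] at hg hk
  refine ⟨g.trans k, (mem_Kodd _ _).2 ⟨isom_trans hg.1 hk.1, ?_, ?_⟩, act_trans _ _ _ _⟩
  · rw [LinearEquiv.trans_apply, hg.2.1, hk.2.1]
  · rw [det_trans', hg.2.2, hk.2.2, one_mul]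

lemma orbit_symm {l : ℕ} {V V' : ℕ → Submodule ℂ (Fin (2 * l + 1) → ℂ)}
    (h : InKOddOrbit l V V') : InKOddOrbit l V' V := by
  obtain ⟨g, hg, h⟩ := h
  rw [mem_Kodd] at hg
  refine ⟨g.symm, (mem_Kodd _ _).2 ⟨isom_symm hg.1, ?_, ?_⟩, act_symm _ _ _ _ h⟩
  · rw [LinearEquiv.symm_apply_eq, hg.2.1]
  · have := det_symm' g
    rwa [hg.2.2, mul_one] at this

lemma act_flag {l : ℕ} {V : ℕ → Submodule ℂ (Fin (2 * l + 1) → ℂ)}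
    (hV : IsIsoFlag (2 * l + 1) l V) {g : (Fin (2 * l + 1) → ℂ) ≃ₗ[ℂ] (Fin (2 * l + 1) → ℂ)}
    (hg : IsIsom l g) : IsIsoFlag (2 * l + 1) l (actFlag (2 * l + 1) g V) := by
  refine ⟨fun i hi => ?_, fun i => map_mono (hV.2.1 i), fun i hi => ?_, ?_⟩
  · rw [actFlag, LinearEquiv.finrank_map_eq, hV.1 i hi]
  · rw [actFlag, actFlag, hV.2.2.1 i hi]
  · rintro _ ⟨u, hu, rfl⟩ _ ⟨w, hw, rfl⟩
    exact (hg u w).trans (hV.2.2.2 u hu w hw)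

lemma ty_act {l : ℕ} (V : ℕ → Submodule ℂ (Fin (2 * l + 1) → ℂ))
    {g : (Fin (2 * l + 1) → ℂ) ≃ₗ[ℂ] (Fin (2 * l + 1) → ℂ)}
    (hg : IsIsom l g) (h0 : g (ev l l) = ev l l) : ty l (actFlag (2 * l + 1) g V) = ty l V := by
  classical
  unfold ty
  congr 1
  funext j
  rw [eq_iff_iff]
  constructor
  · intro h x hx
    rw [← hg, h0]
    exact h _ (mem_map_of_mem hx)
  · rintro h _ ⟨x, hx, rfl⟩
    have := h x hx
    rw [← hg, h0] at this
    exact this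

/-- two flags of the same type are related by an isometry of prescribed determinant
if the type is `< l` -/
lemma same_type {l : ℕ} {V V' : ℕ → Submodule ℂ (Fin (2 * l + 1) → ℂ)}
    (hV : IsIsoFlag (2 * l + 1) l V) (hV' : IsIsoFlag (2 * l + 1) l V')
    (hlt : ty l V < l) (h : ty l V = ty l V') : InKOddOrbit l V V' := by
  obtain ⟨g, hg, hge, hgV⟩ := normal hV
  obtain ⟨k, hk, hke, hkV⟩ := normal hV'
  rw [← h] at hke
  have aux : ∀ r, IsIsom l r → r (ep l (ty l V)) = ep l (ty l V) →
      actFlag (2 * l + 1) r (V0 l) = V0 l →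
      LinearMap.det ((g.symm.trans r).trans k).toLinearMap = 1 → InKOddOrbit l V V' := by
    intro r hr hre hrV hdet
    refine ⟨(g.symm.trans r).trans k, (mem_Kodd _ _).2
      ⟨isom_trans (isom_trans (isom_symm hg) hr) hk, ?_, hdet⟩, ?_⟩
    · rw [LinearEquiv.trans_apply, LinearEquiv.trans_apply,
        (LinearEquiv.symm_apply_eq g).2 hge.symm, hre, hke]
    · rw [act_trans, act_trans, act_symm _ _ _ _ hgV, hrV, hkV]
  have hid : IsIsom l (LinearEquiv.refl ℂ _) := fun x y => rfl
  rcases isom_det (Bf (2 * l + 1)) (Bf_nd l) (g.symm.trans k)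
    (isom_trans (isom_symm hg) hk) with hd | hd
  · refine aux (LinearEquiv.refl ℂ _) hid rfl ?_ ?_
    · funext j
      simp [actFlag]
    · rw [LinearEquiv.trans_refl]
      exact hd
  · set t := ty l V with ht
    obtain ⟨r, hr, hrd, hrf⟩ := exists_refl (Bf (2 * l + 1)) (Bf_symm _)
      (ev l l - ev l t) (by
        simp only [map_sub, LinearMap.sub_apply]
        rw [Bf_ev_ev _ _ _ (by omega), Bf_ev_ev _ _ _ (by omega), Bf_ev_ev _ _ _ (by omega),
          Bf_ev_ev _ _ _ (by omega), if_pos (by omega), if_neg (by omega), if_neg (by omega),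
          if_neg (by omega)]
        simp)
    refine aux r hr (hrf _ ?_) ?_ ?_
    · rw [ep, if_pos hlt]
      simp only [map_sub, LinearMap.sub_apply, map_add]
      rw [Bf_ev_ev _ _ _ (by omega), Bf_ev_ev _ _ _ (by omega), Bf_ev_ev _ _ _ (by omega),
          Bf_ev_ev _ _ _ (by omega), if_pos (by omega), if_neg (by omega), if_neg (by omega),
          if_pos (by omega)]
      simp
    · funext j
      rw [actFlag, V0, map_span, ← Set.image_comp]
      congr 1
      apply Set.image_congr
      intro i hi
      have hi' : i < l := by
        simp only [Set.mem_Iio] at hi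
        omega
      refine hrf _ ?_
      rw [map_sub, LinearMap.sub_apply, Bf_ev_ev _ _ _ (by omega), Bf_ev_ev _ _ _ (by omega),
        if_neg (by omega), if_neg (by omega), sub_zero]
    · rw [det_trans', det_trans', hrd]
      rw [det_trans'] at hd
      linear_combination -hd

lemma ty_l_orbit {l : ℕ} {V : ℕ → Submodule ℂ (Fin (2 * l + 1) → ℂ)}
    (hV : IsIsoFlag (2 * l + 1) l V) (ht : ty l V = l) (hn : ¬ InKOddOrbit l (V0 l) V) :
    ∃ g, IsIsom l g ∧ g (ev l l) = ev l l ∧ LinearMap.det g.toLinearMap = -1 ∧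
      actFlag (2 * l + 1) g (V0 l) = V := by
  obtain ⟨g, hg, hge, hgV⟩ := normal hV
  rw [ht, ep, if_neg (lt_irrefl l)] at hge
  refine ⟨g, hg, hge, ?_, hgV⟩
  rcases isom_det (Bf (2 * l + 1)) (Bf_nd l) g hg with hd | hd
  · exact absurd ⟨g, (mem_Kodd _ _).2 ⟨hg, hge, hd⟩, hgV⟩ hn
  · exact hd

open Classical in
/-- the complete invariant -/
def cinv (l : ℕ) (V : ℕ → Submodule ℂ (Fin (2 * l + 1) → ℂ)) : Fin (l + 2) :=
  if InKOddOrbit l (V0 l) V then ⟨l + 1, by omega⟩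
  else ⟨ty l V, by have := ty_le l V; omega⟩

lemma cinv_inv {l : ℕ} {V V' : ℕ → Submodule ℂ (Fin (2 * l + 1) → ℂ)}
    (h : InKOddOrbit l V V') : cinv l V = cinv l V' := by
  have h1 : InKOddOrbit l (V0 l) V ↔ InKOddOrbit l (V0 l) V' :=
    ⟨fun k => orbit_trans k h, fun k => orbit_trans k (orbit_symm h)⟩
  have h2 : ty l V = ty l V' := by
    obtain ⟨g, hg, rfl⟩ := h
    rw [mem_Kodd] at hg
    rw [ty_act V hg.1 hg.2.1]
  unfold cinv
  by_cases h3 : InKOddOrbit l (V0 l) V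
  · rw [if_pos h3, if_pos (h1.1 h3)]
  · rw [if_neg h3, if_neg (mt h1.2 h3)]
    simp [h2]

lemma cinv_inj {l : ℕ} {V V' : ℕ → Submodule ℂ (Fin (2 * l + 1) → ℂ)}
    (hV : IsIsoFlag (2 * l + 1) l V) (hV' : IsIsoFlag (2 * l + 1) l V')
    (h : cinv l V = cinv l V') : InKOddOrbit l V V' := by
  have t1 := ty_le l V
  have t2 := ty_le l V'
  by_cases h1 : InKOddOrbit l (V0 l) V <;> by_cases h2 : InKOddOrbit l (V0 l) V' <;>
    simp only [cinv, h1, h2, if_true, if_false, Fin.mk.injEq] at h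
  · exact orbit_trans (orbit_symm h1) h2
  · omega
  · omega
  · rcases t1.lt_or_eq with hlt | heq
    · exact same_type hV hV' hlt h
    · obtain ⟨g, hg, hge, hgd, hgV⟩ := ty_l_orbit hV heq h1
      obtain ⟨k, hk, hke, hkd, hkV⟩ := ty_l_orbit hV' (h ▸ heq) h2
      refine ⟨g.symm.trans k, (mem_Kodd _ _).2 ⟨isom_trans (isom_symm hg) hk, ?_, ?_⟩, ?_⟩
      · rw [LinearEquiv.trans_apply, (LinearEquiv.symm_apply_eq g).2 hge.symm, hke]
      · have := det_symm' g
        rw [det_trans', hkd]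
        rw [hgd] at this
        linear_combination this
      · rw [act_trans, act_symm _ _ _ _ hgV, hkV]

lemma V0_ty (l : ℕ) : ty l (V0 l) = l := by
  apply le_antisymm (ty_le _ _)
  rw [← ty_iff (V0_flag l) l le_rfl]
  have : V0 l l ≤ LinearMap.ker (Bf (2 * l + 1) (ev l l)) := by
    rw [V0, span_le]
    rintro _ ⟨j, hj, rfl⟩
    simp only [min_self, Set.mem_Iio] at hj
    change Bf (2 * l + 1) (ev l l) (ev l j) = 0
    rw [Bf_ev_ev _ _ _ (by omega), if_neg (by omega)]
  exact fun x hx => this hx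

lemma exists_type (l t : ℕ) (ht : t < l) : ∃ V, IsIsoFlag (2 * l + 1) l V ∧ ty l V = t := by
  have h00 : Bf (2 * l + 1) (ev l l) (ev l l) = 1 := by
    rw [Bf_ev_ev _ _ _ (by omega), if_pos (by omega)]
  have li : ∀ x, Bf (2 * l + 1) x x = 1 → LinearIndependent ℂ (fun _ : Fin 1 => x) := by
    intro x hx
    rw [linearIndependent_unique_iff]
    rintro rfl
    simp at hx
  obtain ⟨h, hh, hhe⟩ := witt_ext (Bf (2 * l + 1)) (Bf_symm _) (Bf_nd l) (2 * l) 1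
    (by simp; omega) (fun _ => ep l t) (fun _ => ev l l) (li _ (ep_ep l t)) (li _ h00)
    (by intro _ _; rw [ep_ep, h00])
  have hhe := hhe 0
  have hF := act_flag (V0_flag l) hh
  refine ⟨_, hF, ?_⟩
  have hb : ∀ j < l, Bf (2 * l + 1) (ev l l) (h (ev l j)) = if j = t then 1 else 0 := by
    intro j hj
    rw [← hhe, hh, ep_ev l t j hj]
  apply le_antisymm
  · by_contra! hcon
    have := (ty_iff hF (t + 1) ht).2 hcon (h (ev l t))
      (mem_map_of_mem (subset_span ⟨t, by simp only [Set.mem_Iio]; omega, rfl⟩))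
    rw [hb t ht, if_pos rfl] at this
    exact one_ne_zero this
  · rw [← ty_iff hF t ht.le]
    have : actFlag (2 * l + 1) h (V0 l) t ≤ LinearMap.ker (Bf (2 * l + 1) (ev l l)) := by
      rw [actFlag, V0, map_span, span_le]
      rintro _ ⟨_, ⟨j, hj, rfl⟩, rfl⟩
      simp only [Set.mem_Iio] at hj
      change Bf (2 * l + 1) (ev l l) (h (ev l j)) = 0
      rw [hb j (by omega), if_neg (by omega)]
    exact fun x hx => this hx

lemma V0_self (l : ℕ) : InKOddOrbit l (V0 l) (V0 l) := by
  refine ⟨LinearEquiv.refl ℂ _, (mem_Kodd _ _).2 ⟨fun _ _ => rfl, rfl, by simp⟩, ?_⟩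
  funext k
  simp [actFlag]

lemma orbit_ty {l : ℕ} {V V' : ℕ → Submodule ℂ (Fin (2 * l + 1) → ℂ)}
    (h : InKOddOrbit l V V') : ty l V = ty l V' := by
  obtain ⟨g, hg, rfl⟩ := h
  rw [mem_Kodd] at hg
  rw [ty_act V hg.1 hg.2.1]

lemma cinv_surj (l : ℕ) (hl : 2 ≤ l) (i : Fin (l + 2)) :
    ∃ V, IsIsoFlag (2 * l + 1) l V ∧ cinv l V = i := by
  obtain ⟨i, hi⟩ := i
  rcases lt_trichotomy i l with h | h | h
  · obtain ⟨V, hV, ht⟩ := exists_type l i h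
    refine ⟨V, hV, ?_⟩
    rw [cinv, if_neg]
    · simp [ht]
    · intro hcon
      have := orbit_ty hcon
      rw [V0_ty] at this
      omega
  · obtain ⟨s, hs, hsd, hsf⟩ := exists_refl (Bf (2 * l + 1)) (Bf_symm _)
      (ev l 0 + ev l (2 * l)) (by
        simp only [map_add, LinearMap.add_apply]
        rw [Bf_ev_ev _ _ _ (by omega), Bf_ev_ev _ _ _ (by omega), Bf_ev_ev _ _ _ (by omega),
          Bf_ev_ev _ _ _ (by omega), if_neg (by omega), if_pos (by omega), if_pos (by omega),
          if_neg (by omega)]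
        norm_num)
    have hse : s (ev l l) = ev l l := by
      apply hsf
      rw [map_add, LinearMap.add_apply, Bf_ev_ev _ _ _ (by omega), Bf_ev_ev _ _ _ (by omega),
        if_neg (by omega), if_neg (by omega), add_zero]
    refine ⟨_, act_flag (V0_flag l) hs, ?_⟩
    rw [cinv, if_neg]
    · simp [ty_act _ hs hse, V0_ty, h]
    · rintro ⟨g, hg, hgV⟩
      rw [mem_Kodd] at hg
      have h1 := stab_det l (g.trans s.symm) (isom_trans hg.1 (isom_symm hs))
        (by rw [LinearEquiv.trans_apply, hg.2.1, (LinearEquiv.symm_apply_eq s).2 hse.symm])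
        (by rw [act_trans, hgV, act_symm _ _ _ _ rfl])
      have h2 := det_symm' s
      rw [det_trans', hg.2.2, mul_one] at h1
      rw [h1, hsd] at h2
      norm_num at h2
  · refine ⟨V0 l, V0_flag l, ?_⟩
    rw [cinv, if_pos (V0_self l)]
    ext
    simp
    omega

/-- The action of `K ≅ SO(2l)` on maximal isotropic flags in `ℂ^{2l+1}` has exactly
`l + 2` orbits. -/
theorem stmt_2 (l : ℕ) (hl : 2 ≤ l) :
    Finite (IsoOrbitSpaceOdd l) ∧ Nat.card (IsoOrbitSpaceOdd l) = l + 2 := by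
  let f : IsoOrbitSpaceOdd l → Fin (l + 2) :=
    Quot.lift (fun F => cinv l F.1) fun F F' h => cinv_inv h
  have hf : Function.Bijective f := by
    constructor
    · intro x y
      induction x using Quot.ind with | mk F =>
      induction y using Quot.ind with | mk F' =>
      intro h
      exact Quot.sound (cinv_inj F.2 F'.2 h)
    · intro i
      obtain ⟨V, hV, h⟩ := cinv_surj l hl i
      exact ⟨Quot.mk _ ⟨V, hV⟩, h⟩
  let e := Equiv.ofBijective f hf
  exact ⟨Finite.of_equiv _ e.symm, by rw [Nat.card_congr e, Nat.card_fin]⟩
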